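/- Let n ≥ 3, let 1 ≤ m < n, and let k ≥ 1. Let U⁺(kℤ) be the set of matrices in SL_n(ℤ) of the form I + X where X is supported in the top-right m×(n−m) block (rows 1..m, columns m+1..n) and all entries of X are divisible by k, and let U⁻(kℤ) be the analogous set with X supported in the bottom-left (n−m)×m block. Then the subgroup of SL_n(ℤ) generated by U⁺(kℤ) and U⁻(kℤ) has finite index in SL_n(ℤ). -/

import Mathlib

/-!
Let `E(q)` be generated by the elementary matrices with off-diagonal entry divisible by `q`, and let
`Γ` be generated by the two opposite block unipotent groups of level `k`. Commutators through an
index of the other block give `E(k²) ≤ Γ`.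

If `v` is unimodular and `w v = 0`, then `w` is a combination of Koszul relations of `v`, each
supported on two indices, so that `1 + q² v w ∈ E(q)` as soon as there is a third index (Suslin,
Tits). Conjugates of elementary matrices have the form `1 + v w`, so every conjugate of `E(q²)` lies
in `E(q)`, and the normal core `N` of `Γ` contains `E(q)` for `q = k⁴`.

Modulo such an `N`, the congruence subgroup of level `q²` is central: a stable range argument
multiplies `g` in it by an element of `E(q)` to make it fix a given basis vector `eᵢ`, and then its
commutators with the elementary matrices in row `i` lie in `E(q)`. So `SLₙ / N` is a perfect group
with a centre of finite index, and it is finite by Schur.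
-/

namespace BlockUnipotent

open Matrix
open scoped commutatorElement

variable {ι R : Type*} [Fintype ι] [DecidableEq ι]

section Transvection

variable [CommRing R]

/-- The transvection `1 + v wᵀ`, where `wᵀ v = 0`, as an element of the special linear group.
Elementary matrices are the case where `v` and `w` are multiples of basis vectors. -/
def vecTransvection (v w : ι → R) (h : w ⬝ᵥ v = 0) : SpecialLinearGroup ι R :=
  ⟨1 + vecMulVec v w, by
    rw [vecMulVec_eq Unit, det_one_add_replicateCol_mul_replicateRow, h, add_zero]⟩

lemma coe_vecTransvection {v w : ι → R} (h : w ⬝ᵥ v = 0) :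
    (vecTransvection v w h : Matrix ι ι R) = 1 + vecMulVec v w := rfl

lemma vecTransvection_smul {v w : ι → R} (h : w ⬝ᵥ v = 0) (x : ι → R) :
    vecTransvection v w h • x = x + (w ⬝ᵥ x) • v := by
  simp [Matrix.SpecialLinearGroup.smul_def, coe_vecTransvection, add_mulVec, vecMulVec_mulVec]

lemma vecTransvection_single_single {i j : ι} (hij : i ≠ j) (a b : R) :
    vecTransvection (Pi.single i a) (Pi.single j b) (by simp [hij]) =
      SpecialLinearGroup.transvection hij (a * b) := by
  apply Subtype.ext
  ext x y
  simp only [coe_vecTransvection, SpecialLinearGroup.transvection_coe, Matrix.add_apply,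
    vecMulVec_apply, Pi.single_apply, single_apply]
  grind

lemma vecTransvection_add_left {v v' w : ι → R} (h : w ⬝ᵥ v = 0) (h' : w ⬝ᵥ v' = 0) :
    vecTransvection (v + v') w (by rw [dotProduct_add, h, h', add_zero]) =
      vecTransvection v w h * vecTransvection v' w h' := by
  apply Subtype.ext
  simp [coe_vecTransvection, add_mul, mul_add, vecMulVec_mul_vecMulVec, add_vecMulVec, h']
  abel

lemma vecTransvection_add_right {v w w' : ι → R} (h : w ⬝ᵥ v = 0) (h' : w' ⬝ᵥ v = 0) :
    vecTransvection v (w + w') (by rw [add_dotProduct, h, h', add_zero]) =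
      vecTransvection v w h * vecTransvection v w' h' := by
  apply Subtype.ext
  simp [coe_vecTransvection, add_mul, mul_add, vecMulVec_mul_vecMulVec, vecMulVec_add, h]
  abel

lemma vecMul_inv_dotProduct_smul (g : SpecialLinearGroup ι R) (v w : ι → R) :
    (w ᵥ* (g⁻¹ : SpecialLinearGroup ι R)) ⬝ᵥ (g • v) = w ⬝ᵥ v := by
  rw [← dotProduct_mulVec, ← smul_eq_mulVec, ← Matrix.SpecialLinearGroup.smul_def, inv_smul_smul]

lemma conj_vecTransvection (g : SpecialLinearGroup ι R) {v w : ι → R} (h : w ⬝ᵥ v = 0) :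
    g * vecTransvection v w h * g⁻¹ =
      vecTransvection (g • v) (w ᵥ* (g⁻¹ : SpecialLinearGroup ι R))
        (by rw [vecMul_inv_dotProduct_smul, h]) := by
  apply Subtype.ext
  have hg : (g : Matrix ι ι R) * ((g⁻¹ : SpecialLinearGroup ι R) : Matrix ι ι R) = 1 :=
    congrArg Subtype.val (mul_inv_cancel g)
  simp only [Matrix.SpecialLinearGroup.coe_mul, coe_vecTransvection, mul_add, add_mul, mul_one,
    hg, mul_vecMulVec, vecMulVec_mul]
  rfl

lemma commutator_vecTransvection {v a b w : ι → R} (hav : a ⬝ᵥ v = 0) (hwb : w ⬝ᵥ b = 0)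
    (hwv : w ⬝ᵥ v = 0) :
    ⁅vecTransvection v a hav, vecTransvection b w hwb⁆ =
      vecTransvection v ((a ⬝ᵥ b) • w) (by rw [smul_dotProduct, hwv, smul_zero]) := by
  rw [commutatorElement_def, mul_inv_eq_iff_eq_mul, mul_inv_eq_iff_eq_mul]
  apply Subtype.ext
  simp [coe_vecTransvection, add_mul, mul_add, vecMulVec_mul_vecMulVec, hwb, hwv]
  abel

lemma commutator_transvection {i j l : ι} (hil : i ≠ l) (hlj : l ≠ j) (hij : i ≠ j) (a b : R) :
    ⁅SpecialLinearGroup.transvection hil a, SpecialLinearGroup.transvection hlj b⁆ =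
      SpecialLinearGroup.transvection hij (a * b) := by
  rw [commutatorElement_def, mul_inv_eq_iff_eq_mul, mul_inv_eq_iff_eq_mul]
  apply Subtype.ext
  simp [SpecialLinearGroup.transvection_coe, mul_add, add_mul, single_mul_single_of_ne, hij.symm,
    hlj.symm]
  abel

variable {H : Subgroup (SpecialLinearGroup ι R)} {κ : Type*}

lemma vecTransvection_sum_left_mem (s : Finset κ) {v : κ → ι → R} {w : ι → R}
    (h : ∀ k, w ⬝ᵥ v k = 0) (hH : ∀ k, vecTransvection (v k) w (h k) ∈ H) :
    vecTransvection (∑ k ∈ s, v k) w (by simp [dotProduct_sum, h]) ∈ H := by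
  classical
  induction s using Finset.induction_on with
  | empty =>
    convert H.one_mem
    apply Subtype.ext
    simp [coe_vecTransvection]
  | insert k s hk ih =>
    simp only [Finset.sum_insert hk]
    rw [vecTransvection_add_left (h k) (by simp [dotProduct_sum, h])]
    exact H.mul_mem (hH k) ih

lemma vecTransvection_sum_right_mem (s : Finset κ) {v : ι → R} {w : κ → ι → R}
    (h : ∀ k, w k ⬝ᵥ v = 0) (hH : ∀ k, vecTransvection v (w k) (h k) ∈ H) :
    vecTransvection v (∑ k ∈ s, w k) (by simp [sum_dotProduct, h]) ∈ H := by
  classical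
  induction s using Finset.induction_on with
  | empty =>
    convert H.one_mem
    apply Subtype.ext
    simp [coe_vecTransvection]
  | insert k s hk ih =>
    simp only [Finset.sum_insert hk]
    rw [vecTransvection_add_right (h k) (by simp [sum_dotProduct, h])]
    exact H.mul_mem (hH k) ih

end Transvection

section ElementarySubgroup

omit [DecidableEq ι] in
lemma exists_ne_ne_of_three_le_card (hι : 3 ≤ Fintype.card ι) (i j : ι) : ∃ p, p ≠ i ∧ p ≠ j :=
  Cardinal.exists_ne_ne_of_three_le (by rw [Cardinal.mk_fintype]; exact_mod_cast hι) i j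

variable [CommRing R]

variable (ι) in
/-- The subgroup of the special linear group generated by the elementary matrices whose off-diagonal
entry is divisible by `q`. It is not the relative elementary subgroup, which is the normal closure
of this one in the subgroup generated by all elementary matrices. -/
def elementarySubgroup (q : R) : Subgroup (SpecialLinearGroup ι R) :=
  Subgroup.closure {g | ∃ (i j : ι) (hij : i ≠ j) (a : R),
    q ∣ a ∧ SpecialLinearGroup.transvection hij a = g}

variable {q : R}

lemma elementarySubgroup_le_iff {H : Subgroup (SpecialLinearGroup ι R)} :
    elementarySubgroup ι q ≤ H ↔
      ∀ (i j : ι) (hij : i ≠ j) (a : R), q ∣ a → SpecialLinearGroup.transvection hij a ∈ H := by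
  simp only [elementarySubgroup, Subgroup.closure_le, Set.subset_def, Set.mem_ofPred_eq,
    SetLike.mem_coe]
  grind

lemma transvection_mem_elementarySubgroup {i j : ι} (hij : i ≠ j) {a : R} (ha : q ∣ a) :
    SpecialLinearGroup.transvection hij a ∈ elementarySubgroup ι q :=
  elementarySubgroup_le_iff.mp le_rfl i j hij a ha

lemma vecTransvection_mem_of_disjoint {v w : ι → R} (hvw : ∀ i, w i * v i = 0)
    (hq : ∀ i j, i ≠ j → q ∣ v i * w j) :
    vecTransvection v w (Finset.sum_eq_zero fun i _ ↦ hvw i) ∈ elementarySubgroup ι q := by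
  have h (i j : ι) : Pi.single j (w j) ⬝ᵥ Pi.single i (v i) = 0 := by
    obtain rfl | hij := eq_or_ne i j <;> simp [*]
  have hmem (i j : ι) :
      vecTransvection (Pi.single i (v i)) (Pi.single j (w j)) (h i j) ∈ elementarySubgroup ι q := by
    obtain rfl | hij := eq_or_ne i j
    · convert one_mem (elementarySubgroup ι q)
      apply Subtype.ext
      ext x y
      simp only [coe_vecTransvection, Matrix.add_apply, vecMulVec_apply, Pi.single_apply,
        Matrix.SpecialLinearGroup.coe_one]
      grind
    · rw [vecTransvection_single_single hij]
      exact transvection_mem_elementarySubgroup hij (hq i j hij)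
  simpa only [Finset.univ_sum_single] using vecTransvection_sum_left_mem Finset.univ _ fun i ↦
    vecTransvection_sum_right_mem Finset.univ (h i) (hmem i)

lemma column_mem_elementarySubgroup {k : ι} {v : ι → R} {c : R} (hv : v k = 0)
    (hq : ∀ i, q ∣ v i * c) :
    vecTransvection v (Pi.single k c) (by simp [hv]) ∈ elementarySubgroup ι q :=
  vecTransvection_mem_of_disjoint (by simp [Pi.single_apply, hv])
    (by simp [Pi.single_apply, apply_ite, hq])

lemma row_mem_elementarySubgroup {k : ι} {w : ι → R} {c : R} (hw : w k = 0)
    (hq : ∀ j, q ∣ c * w j) :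
    vecTransvection (Pi.single k c) w (by simp [hw]) ∈ elementarySubgroup ι q :=
  vecTransvection_mem_of_disjoint (by simp [Pi.single_apply, hw])
    (by simp [Pi.single_apply, apply_ite, ite_mul, hq])

lemma vecTransvection_sq_mem_of_common_zero {v w : ι → R} (h : w ⬝ᵥ v = 0) {p : ι}
    (hv : v p = 0) (hw : w p = 0) :
    vecTransvection v (q ^ 2 • w) (by rw [smul_dotProduct, h, smul_zero]) ∈
      elementarySubgroup ι q := by
  have hcol := column_mem_elementarySubgroup hv fun i ↦ dvd_mul_left q (v i)
  have hrow := row_mem_elementarySubgroup hw fun j ↦ dvd_mul_right q (w j)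
  have hcomm := commutator_vecTransvection (a := Pi.single p q) (b := Pi.single p q)
    (by simp [hv]) (by simp [hw]) h
  simp only [single_dotProduct, Pi.single_eq_same, ← pow_two] at hcomm
  rw [← hcomm]
  exact Subgroup.commutator_le_self _ (Subgroup.commutator_mem_commutator hcol hrow)

lemma eq_sum_koszul {u v w : ι → R} (huv : u ⬝ᵥ v = 1) (hwv : w ⬝ᵥ v = 0) :
    w = ∑ x : ι × ι, (w x.1 * u x.2) • (Pi.single x.1 (v x.2) - Pi.single x.2 (v x.1)) := by
  ext i
  have hu (k : ι) : ∑ l, w k * u l * v l = w k := by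
    simp only [mul_assoc, ← Finset.mul_sum]
    rw [← dotProduct, huv, mul_one]
  have hw : ∑ k, w k * u i * v k = 0 := by
    simp only [mul_right_comm _ (u i), ← Finset.sum_mul]
    rw [← dotProduct, hwv, zero_mul]
  simp only [Fintype.sum_prod_type, Finset.sum_apply, Pi.smul_apply, Pi.sub_apply, Pi.single_apply,
    smul_eq_mul, mul_sub, mul_ite, mul_zero, Finset.sum_sub_distrib, Finset.sum_ite_irrel,
    Finset.sum_ite_eq, Finset.sum_const_zero, Finset.mem_univ, if_true, hu, hw, sub_zero]

lemma vecTransvection_koszul_mem (hι : 3 ≤ Fintype.card ι) (v : ι → R) (k l : ι) (c : R) :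
    vecTransvection v (q ^ 2 • c • (Pi.single k (v l) - Pi.single l (v k)))
      (by simp [sub_dotProduct, mul_comm]) ∈ elementarySubgroup ι q := by
  obtain rfl | hkl := eq_or_ne k l
  · convert one_mem (elementarySubgroup ι q)
    apply Subtype.ext
    simp [coe_vecTransvection]
  obtain ⟨p, hpk, hpl⟩ := exists_ne_ne_of_three_le_card hι k l
  -- Split `v` into its part on `{k, l}`, which vanishes at `p`, and its part off `{k, l}`.
  let v' : ι → R := Pi.single k (v k) + Pi.single l (v l)
  let v'' := v - v'
  let w : ι → R := c • (Pi.single k (v l) - Pi.single l (v k))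
  have hwv' : w ⬝ᵥ v' = 0 := by
    simp only [w, v', smul_dotProduct, sub_dotProduct, single_dotProduct, Pi.add_apply,
      Pi.single_eq_same, Pi.single_eq_of_ne hkl, Pi.single_eq_of_ne hkl.symm, smul_eq_mul]
    ring
  have hk : v'' k = 0 := by simp [v'', v', hkl]
  have hl : v'' l = 0 := by simp [v'', v', hkl.symm]
  have hon := vecTransvection_sq_mem_of_common_zero (q := q) hwv' (p := p)
    (by simp [v', hpk, hpl]) (by simp [w, hpk, hpl])
  have hoff : vecTransvection v'' (q ^ 2 • w) (by simp [w, sub_dotProduct, hk, hl]) ∈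
      elementarySubgroup ι q := by
    refine vecTransvection_mem_of_disjoint (fun i ↦ ?_) fun i j _ ↦ ⟨v'' i * (q * w j), ?_⟩
    · obtain rfl | hik := eq_or_ne i k
      · simp [hk]
      obtain rfl | hil := eq_or_ne i l
      · simp [hl]
      simp [w, hik, hil]
    · simp only [Pi.smul_apply, smul_eq_mul]
      ring
  have := mul_mem hon hoff
  rw [← vecTransvection_add_left] at this
  simpa only [v'', add_sub_cancel] using this

lemma vecTransvection_sq_mem_elementarySubgroup (hι : 3 ≤ Fintype.card ι) {u v w : ι → R}
    (huv : u ⬝ᵥ v = 1) (hwv : w ⬝ᵥ v = 0) :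
    vecTransvection v (q ^ 2 • w) (by rw [smul_dotProduct, hwv, smul_zero]) ∈
      elementarySubgroup ι q := by
  have hmem := vecTransvection_sum_right_mem Finset.univ _
    fun x : ι × ι ↦ vecTransvection_koszul_mem (q := q) hι v x.1 x.2 (w x.1 * u x.2)
  simpa only [← Finset.smul_sum, ← eq_sum_koszul huv hwv] using hmem

theorem elementarySubgroup_sq_le_normalCore (hι : 3 ≤ Fintype.card ι) :
    elementarySubgroup ι (q ^ 2) ≤ (elementarySubgroup ι q).normalCore := by
  refine elementarySubgroup_le_iff.mpr ?_
  rintro i j hij _ ⟨b, rfl⟩ g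
  have hu := vecMul_inv_dotProduct_smul g (Pi.single i (1 : R)) (Pi.single i 1)
  have hw := vecMul_inv_dotProduct_smul g (Pi.single i (1 : R)) (Pi.single j b)
  rw [single_dotProduct, Pi.single_eq_same, one_mul] at hu
  rw [single_dotProduct, Pi.single_eq_of_ne hij.symm, mul_zero] at hw
  convert vecTransvection_sq_mem_elementarySubgroup (q := q) hι hu hw using 1
  rw [← one_mul (q ^ 2 * b), ← vecTransvection_single_single hij, conj_vecTransvection]
  congr 1
  rw [← smul_vecMul, ← Pi.single_smul', smul_eq_mul]

end ElementarySubgroup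

section Generation

variable (R) in
/-- The pointwise stabilizer in the special linear group of the standard basis vectors with index
outside `s`. -/
def basisFixer [CommRing R] (s : Finset ι) : Subgroup (SpecialLinearGroup ι R) :=
  fixingSubgroup _ ((fun i ↦ (Pi.single i 1 : ι → R)) '' (s : Set ι)ᶜ)

section CommRing

variable [CommRing R] {s : Finset ι}

lemma mem_basisFixer_iff {g : SpecialLinearGroup ι R} :
    g ∈ basisFixer R s ↔ ∀ i ∉ s, g • (Pi.single i 1 : ι → R) = Pi.single i 1 := by
  simp [basisFixer, mem_fixingSubgroup_iff]

lemma vecTransvection_single_mem_basisFixer {j : ι} (hj : j ∈ s) {v : ι → R} {c : R}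
    (h : Pi.single j c ⬝ᵥ v = 0) : vecTransvection v (Pi.single j c) h ∈ basisFixer R s :=
  mem_basisFixer_iff.mpr fun i hi ↦ by
    rw [vecTransvection_smul, single_dotProduct, Pi.single_eq_of_ne (ne_of_mem_of_not_mem hj hi),
      mul_zero, zero_smul, add_zero]

lemma column_mem_inf_basisFixer {j : ι} (hj : j ∈ s) {v : ι → R} (hv : v j = 0) :
    vecTransvection v (Pi.single j 1) (by simp [hv]) ∈ elementarySubgroup ι 1 ⊓ basisFixer R s :=
  ⟨column_mem_elementarySubgroup hv fun _ ↦ one_dvd _, vecTransvection_single_mem_basisFixer hj _⟩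

lemma isUnit_of_dvd_column {g : SpecialLinearGroup ι R} (hg : g ∈ basisFixer R s) {j : ι}
    (hj : j ∈ s) {d : R} (hd : ∀ i ∈ s, d ∣ (g • (Pi.single j 1 : ι → R)) i) : IsUnit d := by
  have hinv (x : ι) (hx : x ∉ s) : (g⁻¹ : SpecialLinearGroup ι R) j x = 0 := by
    have := congrFun (mem_basisFixer_iff.mp (inv_mem hg) x hx) j
    simpa [Matrix.SpecialLinearGroup.smul_def, ne_of_mem_of_not_mem hj hx] using this
  have hone : ∑ x, (g⁻¹ : SpecialLinearGroup ι R) j x * (g • (Pi.single j 1 : ι → R)) x = 1 := by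
    have := congrFun (inv_smul_smul g (Pi.single j 1 : ι → R)) j
    rwa [Pi.single_eq_same] at this
  rw [isUnit_iff_dvd_one, ← hone]
  refine Finset.dvd_sum fun x _ ↦ ?_
  by_cases hx : x ∈ s
  · exact (hd x hx).mul_left _
  · rw [hinv x hx, zero_mul]
    exact dvd_zero d

lemma exists_smul_apply_eq_one {x : ι → R} {y l : ι} (hy : y ∈ s) (hyl : y ≠ l)
    (hx : IsUnit (x y)) :
    ∃ h ∈ elementarySubgroup ι 1 ⊓ basisFixer R s, (h • x) l = 1 := by
  obtain ⟨u, hu⟩ := hx.exists_right_inv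
  refine ⟨vecTransvection (Pi.single l (u * (1 - x l))) (Pi.single y 1) (by simp [hyl]),
    column_mem_inf_basisFixer hy (by simp [hyl]), ?_⟩
  simp [vecTransvection_smul, ← mul_assoc, hu]

lemma exists_smul_eq_single {x : ι → R} {j : ι} (hj : j ∈ s) (hx : x j = 1) :
    ∃ h ∈ elementarySubgroup ι 1 ⊓ basisFixer R s, h • x = Pi.single j 1 := by
  have hv : (Pi.single j 1 - x : ι → R) j = 0 := by simp [hx]
  refine ⟨_, column_mem_inf_basisFixer hj hv, ?_⟩
  simp [vecTransvection_smul, hx]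

lemma basisFixer_singleton_le (j : ι) : basisFixer R {j} ≤ elementarySubgroup ι 1 := by
  intro g hg
  let v : ι → R := g • (Pi.single j 1 : ι → R) - Pi.single j 1
  have hgv : (g : Matrix ι ι R) = 1 + vecMulVec v (Pi.single j 1) := by
    refine ext_of_mulVec_single fun i ↦ ?_
    obtain rfl | hij := eq_or_ne i j
    · rw [add_mulVec, one_mulVec, vecMulVec_mulVec, single_dotProduct, Pi.single_eq_same, mul_one,
        MulOpposite.op_one, one_smul, add_sub_cancel]
      rfl
    · rw [add_mulVec, one_mulVec, vecMulVec_mulVec, single_dotProduct, Pi.single_eq_of_ne' hij,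
        mul_zero, MulOpposite.op_zero, zero_smul, add_zero]
      exact mem_basisFixer_iff.mp hg i (by simp [hij])
  have hvj : v j = 0 := by
    have hdet := g.det_coe
    rw [hgv, vecMulVec_eq Unit, det_one_add_replicateCol_mul_replicateRow] at hdet
    simpa using hdet
  have hg' : g = vecTransvection v (Pi.single j 1) (by simp [hvj]) := Subtype.ext hgv
  exact hg' ▸ (column_mem_inf_basisFixer (Finset.mem_singleton_self j) hvj).1

end CommRing

variable [EuclideanDomain R] {s : Finset ι}

lemma exists_smul_apply_dvd {x : ι → R} (hx : ∃ i ∈ s, x i ≠ 0) :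
    ∃ h ∈ elementarySubgroup ι 1 ⊓ basisFixer R s, ∃ y ∈ s, ∀ i ∈ s, (h • x) y ∣ (h • x) i := by
  let D : Set R :=
    {d | d ≠ 0 ∧ ∃ h ∈ elementarySubgroup ι 1 ⊓ basisFixer R s, ∃ y ∈ s, (h • x) y = d}
  have hD : D.Nonempty := by
    obtain ⟨i, hi, hxi⟩ := hx
    exact ⟨x i, hxi, 1, one_mem _, i, hi, by rw [one_smul]⟩
  obtain ⟨d, ⟨hd, h, hh, y, hy, hyd⟩, hmin⟩ := EuclideanDomain.r_wellFounded.has_min D hD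
  refine ⟨h, hh, y, hy, fun i hi ↦ ?_⟩
  obtain rfl | hiy := eq_or_ne i y
  · rfl
  rw [hyd, ← EuclideanDomain.mod_eq_zero]
  by_contra hmod
  let e : SpecialLinearGroup ι R :=
    vecTransvection (Pi.single i (-((h • x) i / d))) (Pi.single y 1) (by simp [hiy.symm])
  have he : (e • h • x) i = (h • x) i % d := by
    simp [e, vecTransvection_smul, hyd, EuclideanDomain.mod_eq_sub_mul_div, sub_eq_add_neg]
  exact hmin _ ⟨hmod, e * h, mul_mem (column_mem_inf_basisFixer hy (by simp [hiy.symm])) hh, i, hi,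
    by rw [mul_smul, he]⟩ (EuclideanDomain.mod_lt _ hd)

lemma exists_mul_smul_single_eq {g : SpecialLinearGroup ι R} (hg : g ∈ basisFixer R s) {j l : ι}
    (hj : j ∈ s) (hl : l ∈ s) (hlj : l ≠ j) :
    ∃ h ∈ elementarySubgroup ι 1 ⊓ basisFixer R s,
      (h * g) • (Pi.single j 1 : ι → R) = Pi.single j 1 := by
  have hne : ∃ i ∈ s, (g • (Pi.single j 1 : ι → R)) i ≠ 0 := by
    by_contra! hzero
    exact not_isUnit_zero (isUnit_of_dvd_column hg hj fun i hi ↦ zero_dvd_iff.mpr (hzero i hi))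
  obtain ⟨h₁, hh₁, y, hy, hdvd⟩ := exists_smul_apply_dvd hne
  have hunit : IsUnit ((h₁ • g • (Pi.single j 1 : ι → R)) y) := by
    rw [← mul_smul] at hdvd ⊢
    exact isUnit_of_dvd_column (mul_mem hh₁.2 hg) hj hdvd
  obtain ⟨h₂, hh₂, hone⟩ : ∃ h ∈ elementarySubgroup ι 1 ⊓ basisFixer R s,
      (h • h₁ • g • (Pi.single j 1 : ι → R)) j = 1 := by
    obtain rfl | hyj := eq_or_ne y j
    · obtain ⟨h, hh, hl'⟩ := exists_smul_apply_eq_one hy hlj.symm hunit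
      obtain ⟨h', hh', hy'⟩ := exists_smul_apply_eq_one hl hlj (hl' ▸ isUnit_one)
      exact ⟨h' * h, mul_mem hh' hh, by rw [mul_smul, hy']⟩
    · exact exists_smul_apply_eq_one hy hyj hunit
  obtain ⟨h₃, hh₃, hsingle⟩ := exists_smul_eq_single hj hone
  exact ⟨h₃ * h₂ * h₁, mul_mem (mul_mem hh₃ hh₂) hh₁, by simpa only [mul_smul] using hsingle⟩

theorem elementarySubgroup_one : elementarySubgroup ι (1 : R) = ⊤ := by
  obtain _ | _ := isEmpty_or_nonempty ι
  · exact Subsingleton.elim _ _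
  suffices h : ∀ s : Finset ι, s.Nonempty → basisFixer R s ≤ elementarySubgroup ι 1 from
    top_le_iff.mp fun g _ ↦ h Finset.univ Finset.univ_nonempty (mem_basisFixer_iff.mpr (by simp))
  intro s hs
  induction hs using Finset.Nonempty.cons_induction with
  | singleton j => exact basisFixer_singleton_le j
  | cons j t hjt ht ih =>
    intro g hg
    obtain ⟨l, hl⟩ := ht
    obtain ⟨h, hh, hgj⟩ := exists_mul_smul_single_eq hg (Finset.mem_cons_self j t)
      (Finset.mem_cons_of_mem hl) (ne_of_mem_of_not_mem hl hjt)
    refine ((elementarySubgroup ι 1).mul_mem_cancel_left hh.1).mp (ih (mem_basisFixer_iff.mpr ?_))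
    intro i hi
    obtain rfl | hij := eq_or_ne i j
    · exact hgj
    · exact mem_basisFixer_iff.mp (mul_mem hh.2 hg) i (by simp [hij, hi])

end Generation

section StableRange

lemma exists_prime_dvd_add_mul_imp [CommRing R] [IsDomain R] [UniqueFactorizationMonoid R] {c : R}
    (hc : c ≠ 0) (a b : R) :
    ∃ t, ∀ p, Prime p → p ∣ c → p ∣ a + t * b → p ∣ a ∧ p ∣ b := by
  induction c using UniqueFactorizationMonoid.induction_on_prime with
  | h₁ => exact absurd rfl hc
  | h₂ c hunit => exact ⟨0, fun p hp hpc ↦ absurd (isUnit_of_dvd_unit hpc hunit) hp.not_isUnit⟩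
  | h₃ c r hc0 hr ih =>
    obtain ⟨t, ht⟩ := ih hc0
    by_cases hgood : r ∣ a + t * b → r ∣ a ∧ r ∣ b
    · refine ⟨t, fun p hp hpc hpt ↦ ?_⟩
      obtain hpr | hpc := hp.dvd_or_dvd hpc
      · have hassoc := hp.associated_of_dvd hr hpr
        simpa only [hassoc.dvd_iff_dvd_left] using hgood (hassoc.dvd_iff_dvd_left.mp hpt)
      · exact ht p hp hpc hpt
    · push Not at hgood
      refine ⟨t + c, fun p hp hpc hpt ↦ ?_⟩
      rw [add_mul, ← add_assoc] at hpt
      by_cases hpc' : p ∣ c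
      · exact ht p hp hpc' ((dvd_add_left (hpc'.mul_right b)).mp hpt)
      · have hassoc := hp.associated_of_dvd hr ((hp.dvd_or_dvd hpc).resolve_right hpc')
        have hpa : p ∣ a + t * b := hassoc.dvd_iff_dvd_left.mpr hgood.1
        have hpb : p ∣ b := (hp.dvd_or_dvd ((dvd_add_right hpa).mp hpt)).resolve_left hpc'
        exact ⟨(dvd_add_left (hpb.mul_left t)).mp hpa, hpb⟩

omit [DecidableEq ι] in
lemma exists_dotProduct_eq_one [CommRing R] [IsPrincipalIdealRing R] {w : ι → R} (hw : w ≠ 0)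
    (hprime : ∀ p, Prime p → ∃ i, ¬ p ∣ w i) : ∃ u, u ⬝ᵥ w = 1 := by
  suffices h : Ideal.span (Set.range w) = ⊤ from
    Ideal.mem_span_range_iff_exists_fun.mp (h ▸ Submodule.mem_top)
  by_contra htop
  obtain ⟨M, hM, hle⟩ := Ideal.exists_le_maximal _ htop
  have hmem (i : ι) : w i ∈ M := hle (Ideal.subset_span ⟨i, rfl⟩)
  have hbot : M ≠ ⊥ := by
    rintro rfl
    exact hw (funext hmem)
  obtain ⟨i, hi⟩ := hprime _ (Submodule.IsPrincipal.prime_generator_of_isPrime M hbot)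
  exact hi ((Submodule.IsPrincipal.mem_iff_generator_dvd M).mp (hmem i))

variable [CommRing R] [IsDomain R] [IsPrincipalIdealRing R]

lemma exists_dotProduct_update_eq_one {r z : ι → R} (hrz : r ⬝ᵥ z = 1) {i j p : ι} (hij : i ≠ j)
    (hip : i ≠ p) (hjp : j ≠ p) (hj : z j ≠ 0) :
    ∃ t u, u ⬝ᵥ Function.update (z + z p • Pi.single i t) p 0 = 1 := by
  obtain ⟨t, ht⟩ := exists_prime_dvd_add_mul_imp hj (z i) (z p)
  refine ⟨t, exists_dotProduct_eq_one (fun h ↦ hj ?_) fun π hπ ↦ ?_⟩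
  · simpa [hjp, hij.symm] using congrFun h j
  · by_contra! hdvd
    have hne (k : ι) (hki : k ≠ i) (hkp : k ≠ p) : π ∣ z k := by simpa [hki, hkp] using hdvd k
    obtain ⟨hπi, hπp⟩ := ht π hπ (hne j hij.symm hjp) (by simpa [hip, mul_comm] using hdvd i)
    refine hπ.not_dvd_one (hrz ▸ Finset.dvd_sum fun k _ ↦ dvd_mul_of_dvd_right ?_ _)
    obtain rfl | hki := eq_or_ne k i
    · exact hπi
    obtain rfl | hkp := eq_or_ne k p
    · exact hπp
    exact hne k hki hkp

omit [DecidableEq ι] in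
lemma exists_dotProduct_add_smul_eq_one (hι : 3 ≤ Fintype.card ι) {r z : ι → R}
    (hrz : r ⬝ᵥ z = 1) (p : ι) :
    ∃ x y : ι → R, x p = 0 ∧ y p = 0 ∧ y ⬝ᵥ (z + z p • x) = 1 := by
  classical
  by_cases hz : ∃ j ≠ p, z j ≠ 0
  · obtain ⟨j, hjp, hj⟩ := hz
    obtain ⟨i, hij, hip⟩ := exists_ne_ne_of_three_le_card hι j p
    obtain ⟨t, u, hu⟩ := exists_dotProduct_update_eq_one hrz hij hip hjp hj
    refine ⟨Pi.single i t, Function.update u p 0, by simp [hip.symm], by simp, ?_⟩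
    rw [← hu]
    refine Finset.sum_congr rfl fun k _ ↦ ?_
    obtain rfl | hkp := eq_or_ne k p <;> simp [*]
  · push Not at hz
    obtain ⟨i, hip, -⟩ := exists_ne_ne_of_three_le_card hι p p
    refine ⟨Pi.single i 1, Pi.single i (r p), by simp [hip.symm], by simp [hip.symm], ?_⟩
    have hrp : r p * z p = 1 := by
      rw [← hrz, dotProduct, Fintype.sum_eq_single p fun k hk ↦ by rw [hz k hk, mul_zero]]
    simp [hz i hip, mul_comm, hrp]

omit [DecidableEq ι] in
lemma exists_dotProduct_add_smul_eq (hι : 3 ≤ Fintype.card ι) {q : R} {r v : ι → R} {p : ι}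
    (hrv : r ⬝ᵥ v = 1) (hv : ∀ i ≠ p, q ∣ v i) :
    ∃ x y : ι → R, x p = 0 ∧ y p = 0 ∧ y ⬝ᵥ (v + (q * v p) • x) = q := by
  classical
  choose! z hz using hv
  have hrz : Function.update (q • r) p (r p) ⬝ᵥ Function.update z p (v p) = 1 := by
    rw [← hrv]
    refine Finset.sum_congr rfl fun i _ ↦ ?_
    obtain rfl | hi := eq_or_ne i p
    · simp
    · simp [hz i hi, hi, mul_assoc, mul_left_comm]
  obtain ⟨x, y, hx, hy, hxy⟩ := exists_dotProduct_add_smul_eq_one hι hrz p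
  refine ⟨x, y, hx, hy, ?_⟩
  calc y ⬝ᵥ (v + (q * v p) • x)
      = y ⬝ᵥ (q • (Function.update z p (v p) + v p • x)) := by
        refine Finset.sum_congr rfl fun i _ ↦ ?_
        obtain rfl | hi := eq_or_ne i p
        · simp [hy]
        · simp [hz i hi, hi, mul_add, mul_assoc]
    _ = q := by
        rw [Function.update_self] at hxy
        rw [dotProduct_smul, hxy, smul_eq_mul, mul_one]

lemma exists_smul_eq_single_of_modEq (hι : 3 ≤ Fintype.card ι) {q : R} {r v : ι → R} {p : ι}
    (hrv : r ⬝ᵥ v = 1) (hp : q ^ 2 ∣ v p - 1) (hv : ∀ i ≠ p, q ∣ v i) :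
    ∃ h ∈ elementarySubgroup ι q, h • v = Pi.single p 1 := by
  obtain ⟨c, hc⟩ := hp
  obtain ⟨x, y, hx, hy, hxy⟩ := exists_dotProduct_add_smul_eq hι hrv hv
  let h₁ := vecTransvection x (Pi.single p q) (by simp [hx])
  let h₂ := vecTransvection (Pi.single p q) (-c • y) (by simp [hy])
  let v₂ : ι → R := v + (q * v p) • x - (q ^ 2 * c) • Pi.single p 1
  have hv₂ : h₂ • h₁ • v = v₂ := by
    have hv₁ : h₁ • v = v + (q * v p) • x := by simp [h₁, vecTransvection_smul]
    rw [hv₁, vecTransvection_smul, smul_dotProduct, hxy]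
    ext i
    simp only [Pi.add_apply, Pi.sub_apply, Pi.smul_apply, smul_eq_mul, Pi.single_apply, v₂]
    grind
  have hone : v₂ p = 1 := by simp [v₂, hx, ← hc]
  have hdiff : (Pi.single p 1 - v₂ : ι → R) p = 0 := by simp [hone]
  refine ⟨vecTransvection (Pi.single p 1 - v₂) (Pi.single p 1) (by simp [hone]) * (h₂ * h₁),
    mul_mem (column_mem_elementarySubgroup hdiff fun i ↦ ?_) (mul_mem
      (row_mem_elementarySubgroup (by simp [hy]) fun _ ↦ dvd_mul_right _ _)
      (column_mem_elementarySubgroup hx fun _ ↦ dvd_mul_left _ _)), ?_⟩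
  · obtain rfl | hi := eq_or_ne i p
    · simp [hone]
    · simp [v₂, hi, mul_assoc, dvd_add, hv]
  · rw [mul_smul, mul_smul, vecTransvection_smul, hv₂, single_dotProduct, hone]
    simp

end StableRange

section Schur

variable {G : Type*} [Group G]

lemma commutatorElement_mem_iff_commute {N : Subgroup G} [N.Normal] {g x : G} :
    ⁅g, x⁆ ∈ N ↔ Commute (g : G ⧸ N) x := by
  rw [← QuotientGroup.eq_one_iff, ← commutatorElement_eq_one_iff_commute]
  rfl

lemma commutatorElement_mul_center (a b : G) {z w : G} (hz : z ∈ Subgroup.center G)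
    (hw : w ∈ Subgroup.center G) : ⁅a * z, b * w⁆ = ⁅a, b⁆ := by
  rw [Subgroup.mem_center_iff] at hz hw
  calc ⁅a * z, b * w⁆ = a * (z * (b * w)) * z⁻¹ * a⁻¹ * w⁻¹ * b⁻¹ := by
        rw [commutatorElement_def]; group
    _ = a * b * (w * a⁻¹) * w⁻¹ * b⁻¹ := by rw [← hz]; group
    _ = ⁅a, b⁆ := by rw [← hw, commutatorElement_def]; group

lemma finite_of_isPerfect [Group.IsPerfect G] [(Subgroup.center G).FiniteIndex] : Finite G := by
  have : Finite (commutatorSet G) := by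
    refine (Set.finite_range fun x : (G ⧸ Subgroup.center G) × (G ⧸ Subgroup.center G) ↦
      ⁅x.1.out, x.2.out⁆).subset ?_
    rintro _ ⟨a, b, rfl⟩
    obtain ⟨z, hz⟩ := QuotientGroup.mk_out_eq_mul (Subgroup.center G) a
    obtain ⟨w, hw⟩ := QuotientGroup.mk_out_eq_mul (Subgroup.center G) b
    exact ⟨(a, b), by simp only [hz, hw, commutatorElement_mul_center a b z.2 w.2]⟩
  have : Finite (⊤ : Subgroup G) := by
    rw [← Group.IsPerfect.commutator_eq_top]
    infer_instance
  exact Finite.of_equiv _ Subgroup.topEquiv.toEquiv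

end Schur

section Congruence

variable [CommRing R] {q : R}

variable (ι) in
/-- The principal congruence subgroup of level `q`: the kernel of reduction modulo `q` on the
special linear group. -/
def congruenceSubgroup (q : R) : Subgroup (SpecialLinearGroup ι R) :=
  (SpecialLinearGroup.map (Ideal.Quotient.mk (Ideal.span {q}))).ker

lemma mem_congruenceSubgroup_iff {g : SpecialLinearGroup ι R} :
    g ∈ congruenceSubgroup ι q ↔ ∀ i j, q ∣ g i j - (1 : Matrix ι ι R) i j := by
  simp only [congruenceSubgroup, MonoidHom.mem_ker, Matrix.SpecialLinearGroup.ext_iff,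
    ← Ideal.mem_span_singleton, ← Ideal.Quotient.mk_eq_mk_iff_sub_mem]
  refine forall₂_congr fun i j ↦ ?_
  simp only [SpecialLinearGroup.map_apply_coe, RingHom.mapMatrix_apply, map_apply,
    Matrix.SpecialLinearGroup.coe_one, one_apply]
  split_ifs <;> simp

lemma congruenceSubgroup_anti {q' : R} (h : q ∣ q') :
    congruenceSubgroup ι q' ≤ congruenceSubgroup ι q := fun _ hg ↦
  mem_congruenceSubgroup_iff.mpr fun i j ↦ h.trans (mem_congruenceSubgroup_iff.mp hg i j)

lemma elementarySubgroup_le_congruenceSubgroup :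
    elementarySubgroup ι q ≤ congruenceSubgroup ι q :=
  elementarySubgroup_le_iff.mpr fun i j hij a ha ↦ mem_congruenceSubgroup_iff.mpr fun x y ↦ by
    rw [SpecialLinearGroup.transvection_coe, Matrix.add_apply, add_sub_cancel_left, single_apply]
    split_ifs
    exacts [ha, dvd_zero q]

lemma congruenceSubgroup_finiteIndex [Ring.HasFiniteQuotients R] (hq : q ≠ 0) :
    (congruenceSubgroup ι q).FiniteIndex := by
  have : Finite (R ⧸ Ideal.span {q}) :=
    Ring.HasFiniteQuotients.finiteQuotient (by simpa using hq)
  have : Finite (SpecialLinearGroup ι (R ⧸ Ideal.span {q})) := Subtype.finite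
  exact Subgroup.finiteIndex_ker _

lemma commutator_transvection_mem_of_smul_single_eq {g : SpecialLinearGroup ι R}
    (hg : g ∈ congruenceSubgroup ι q) {i j : ι} (hij : i ≠ j)
    (hgi : g • (Pi.single i 1 : ι → R) = Pi.single i 1) (a : R) :
    ⁅g, SpecialLinearGroup.transvection hij a⁆ ∈ elementarySubgroup ι q := by
  let w : ι → R := Pi.single j a ᵥ* (g⁻¹ : SpecialLinearGroup ι R)
  have hw : w i = 0 := by
    have := vecMul_inv_dotProduct_smul g (Pi.single i (1 : R)) (Pi.single j a)
    rwa [hgi, dotProduct_single_one, dotProduct_single_one, Pi.single_eq_of_ne hij] at this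
  have hwi : (w - Pi.single j a : ι → R) i = 0 := by simp [hw, hij]
  have ht : SpecialLinearGroup.transvection hij a =
      vecTransvection (Pi.single i 1) (Pi.single j a) (by simp [hij]) := by
    rw [vecTransvection_single_single, one_mul]
  have hcomm : ⁅g, SpecialLinearGroup.transvection hij a⁆ =
      vecTransvection (Pi.single i 1) (w - Pi.single j a)
        (by rw [dotProduct_single_one, hwi]) := by
    rw [commutatorElement_def, mul_inv_eq_iff_eq_mul, ht, conj_vecTransvection,
      ← vecTransvection_add_right]
    simp only [hgi, sub_add_cancel, w]
  rw [hcomm]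
  refine row_mem_elementarySubgroup hwi fun l ↦ ?_
  have hq := (mem_congruenceSubgroup_iff.mp (inv_mem hg) j l).mul_left a
  rw [one_mul]
  convert hq using 1
  simp only [w, Pi.sub_apply, single_vecMul, Pi.smul_apply, smul_eq_mul, row_apply, mul_sub,
    Pi.single_apply, one_apply, mul_ite, mul_one, mul_zero, eq_comm]

variable [IsDomain R] [IsPrincipalIdealRing R]

lemma exists_smul_smul_single_eq (hι : 3 ≤ Fintype.card ι) {g : SpecialLinearGroup ι R}
    (hg : g ∈ congruenceSubgroup ι (q ^ 2)) (i : ι) :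
    ∃ h ∈ elementarySubgroup ι q, h • g • (Pi.single i 1 : ι → R) = Pi.single i 1 := by
  have hcol (k : ι) := mem_congruenceSubgroup_iff.mp hg k i
  have hentry (k : ι) : (g • (Pi.single i 1 : ι → R)) k = g k i := by
    rw [Matrix.SpecialLinearGroup.smul_def, smul_eq_mulVec, mulVec_single_one, col_apply]
  refine exists_smul_eq_single_of_modEq hι (r := Pi.single i 1 ᵥ* (g⁻¹ : SpecialLinearGroup ι R))
    ?_ ?_ fun k hk ↦ ?_
  · rw [vecMul_inv_dotProduct_smul, single_one_dotProduct, Pi.single_eq_same]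
  · simpa only [hentry, one_apply_eq] using hcol i
  · simpa only [hentry, one_apply_ne hk, sub_zero] using (dvd_pow_self q two_ne_zero).trans (hcol k)

theorem commutator_congruenceSubgroup_sq_le
    (hι : 3 ≤ Fintype.card ι) {N : Subgroup (SpecialLinearGroup ι R)} [N.Normal]
    (hN : elementarySubgroup ι q ≤ N) :
    ⁅congruenceSubgroup ι (q ^ 2), elementarySubgroup ι (1 : R)⁆ ≤ N := by
  refine Subgroup.commutator_le.mpr fun g hg x hx ↦ commutatorElement_mem_iff_commute.mpr ?_
  have hle : elementarySubgroup ι (1 : R) ≤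
      (Subgroup.centralizer {(g : SpecialLinearGroup ι R ⧸ N)}).comap (QuotientGroup.mk' N) := by
    refine elementarySubgroup_le_iff.mpr fun i j hij a _ ↦
      Subgroup.mem_centralizer_singleton_iff.mpr (Commute.symm ?_)
    obtain ⟨h, hh, hhgi⟩ := exists_smul_smul_single_eq hι hg i
    have hhg : h * g ∈ congruenceSubgroup ι q :=
      mul_mem (elementarySubgroup_le_congruenceSubgroup hh)
        (congruenceSubgroup_anti (dvd_pow_self q two_ne_zero) hg)
    have hmk : ((h * g : SpecialLinearGroup ι R) : SpecialLinearGroup ι R ⧸ N) = g := by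
      rw [QuotientGroup.mk_mul, (QuotientGroup.eq_one_iff h).mpr (hN hh), one_mul]
    rw [← hmk]
    exact commutatorElement_mem_iff_commute.mp
      (hN (commutator_transvection_mem_of_smul_single_eq hhg hij (by rwa [mul_smul]) a))
  exact (Subgroup.mem_centralizer_singleton_iff.mp (hle hx)).symm

end Congruence

section FiniteIndex

variable [EuclideanDomain R]

lemma isPerfect_specialLinearGroup (hι : 3 ≤ Fintype.card ι) :
    Group.IsPerfect (SpecialLinearGroup ι R) := by
  refine ⟨top_le_iff.mp ?_⟩
  rw [← elementarySubgroup_one]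
  refine elementarySubgroup_le_iff.mpr fun i j hij a _ ↦ ?_
  obtain ⟨l, hli, hlj⟩ := exists_ne_ne_of_three_le_card hι i j
  rw [← mul_one a, ← commutator_transvection hli.symm hlj]
  exact Subgroup.commutator_mem_commutator (Subgroup.mem_top _) (Subgroup.mem_top _)

theorem finiteIndex_of_elementarySubgroup_le [Ring.HasFiniteQuotients R] (hι : 3 ≤ Fintype.card ι)
    {q : R} (hq : q ≠ 0) {N : Subgroup (SpecialLinearGroup ι R)} [N.Normal]
    (hN : elementarySubgroup ι q ≤ N) : N.FiniteIndex := by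
  have hcomm := commutator_congruenceSubgroup_sq_le hι hN
  rw [elementarySubgroup_one] at hcomm
  have hcenter : congruenceSubgroup ι (q ^ 2) ≤
      (Subgroup.center (SpecialLinearGroup ι R ⧸ N)).comap (QuotientGroup.mk' N) := by
    intro g hg
    refine Subgroup.mem_center_iff.mpr fun x ↦ ?_
    obtain ⟨x, rfl⟩ := QuotientGroup.mk'_surjective N x
    exact (commutatorElement_mem_iff_commute.mp (hcomm
      (Subgroup.commutator_mem_commutator hg (Subgroup.mem_top x)))).symm
  have := congruenceSubgroup_finiteIndex (ι := ι) (pow_ne_zero 2 hq)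
  have := Subgroup.finiteIndex_of_le hcenter
  have : (Subgroup.center (SpecialLinearGroup ι R ⧸ N)).FiniteIndex := by
    refine ⟨?_⟩
    rw [← Subgroup.index_comap_of_surjective _ (QuotientGroup.mk'_surjective N)]
    exact Subgroup.FiniteIndex.index_ne_zero
  have := isPerfect_specialLinearGroup (R := R) hι
  have := finite_of_isPerfect (G := SpecialLinearGroup ι R ⧸ N)
  exact Subgroup.finiteIndex_of_finite_quotient

end FiniteIndex

section Blocks

/-- The block unipotent matrices `1 + X` with `X` supported on the entries with row index in `s` and
column index outside `s`, and divisible by `q`. The unipotent radicals `U⁺` and `U⁻` of level `q`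
are `blockUnipotent s q` and `blockUnipotent sᶜ q` with `s` the set of the first `m` indices. -/
def blockUnipotent [CommRing R] (s : Finset ι) (q : R) : Set (SpecialLinearGroup ι R) :=
  {g | ∀ i j, if i = j then g.1 i j = 1 else if i ∈ s ∧ j ∉ s then q ∣ g.1 i j else g.1 i j = 0}

lemma transvection_mem_blockUnipotent [CommRing R] {s : Finset ι} {q a : R} {i j : ι} (hij : i ≠ j)
    (hi : i ∈ s) (hj : j ∉ s) (ha : q ∣ a) :
    SpecialLinearGroup.transvection hij a ∈ blockUnipotent s q := by
  intro x y
  simp only [SpecialLinearGroup.transvection_coe, Matrix.add_apply, one_apply, single_apply]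
  split_ifs <;> grind [zero_add, dvd_zero]

theorem elementarySubgroup_sq_le_closure_blockUnipotent [CommRing R] {s : Finset ι}
    (hs : s.Nonempty) (hs' : sᶜ.Nonempty) (q : R) :
    elementarySubgroup ι (q ^ 2) ≤
      Subgroup.closure (blockUnipotent s q ∪ blockUnipotent sᶜ q) := by
  let Γ := Subgroup.closure (blockUnipotent s q ∪ blockUnipotent sᶜ q)
  have hopposite {i j : ι} (hij : i ≠ j) (hblock : ¬(i ∈ s ↔ j ∈ s)) {a : R} (ha : q ∣ a) :
      SpecialLinearGroup.transvection hij a ∈ Γ := by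
    refine Subgroup.subset_closure ?_
    by_cases hi : i ∈ s
    · exact .inl (transvection_mem_blockUnipotent hij hi (by tauto) ha)
    · have hj : j ∈ s := by tauto
      exact .inr (transvection_mem_blockUnipotent hij (by simpa) (by simpa) ha)
  refine elementarySubgroup_le_iff.mpr ?_
  rintro i j hij _ ⟨b, rfl⟩
  by_cases hsame : i ∈ s ↔ j ∈ s
  · obtain ⟨l, hl⟩ : ∃ l, ¬(i ∈ s ↔ l ∈ s) := by
      obtain ⟨l, hl⟩ := hs
      obtain ⟨l', hl'⟩ := hs'
      rw [Finset.mem_compl] at hl'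
      by_cases hi : i ∈ s
      exacts [⟨l', by tauto⟩, ⟨l, by tauto⟩]
    have hil : i ≠ l := by rintro rfl; exact hl .rfl
    have hlj : l ≠ j := by rintro rfl; exact hl hsame
    rw [show q ^ 2 * b = q * (q * b) by ring, ← commutator_transvection hil hlj hij]
    exact Subgroup.commutator_le_self Γ (Subgroup.commutator_mem_commutator
      (hopposite hil hl (dvd_refl q)) (hopposite hlj (by tauto) (dvd_mul_right q b)))
  · exact hopposite hij hsame (dvd_mul_of_dvd_left (dvd_pow_self q two_ne_zero) b)

end Blocks

end BlockUnipotent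

open BlockUnipotent in
theorem block_unipotent_generators_finite_index_general {ι R : Type*} [Fintype ι] [DecidableEq ι]
    [EuclideanDomain R] [Ring.HasFiniteQuotients R] (hι : 3 ≤ Fintype.card ι)
    {s : Finset ι} (hs : s.Nonempty) (hs' : sᶜ.Nonempty) {q : R} (hq : q ≠ 0) :
    (Subgroup.closure (blockUnipotent s q ∪ blockUnipotent sᶜ q)).FiniteIndex := by
  let Γ := Subgroup.closure (blockUnipotent s q ∪ blockUnipotent sᶜ q)
  have hΓ : elementarySubgroup ι (q ^ 2) ≤ Γ :=
    elementarySubgroup_sq_le_closure_blockUnipotent hs hs' q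
  have hcore : elementarySubgroup ι ((q ^ 2) ^ 2) ≤ Γ.normalCore :=
    (elementarySubgroup_sq_le_normalCore hι).trans (Subgroup.normalCore_mono hΓ)
  have := finiteIndex_of_elementarySubgroup_le hι (pow_ne_zero 2 (pow_ne_zero 2 hq)) hcore
  exact Subgroup.finiteIndex_of_le Γ.normalCore_le

/-- For `n ≥ 3`, `1 ≤ m < n`, `k ≥ 1`, the subgroup of `SL_n(ℤ)` generated by
`U⁺(kℤ)` (matrices `I + X` with `X` supported in the top-right `m × (n-m)` block, entries
divisible by `k`) and `U⁻(kℤ)` (the analogous bottom-left block) has finite index. -/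
theorem block_unipotent_generators_finite_index (n m k : ℕ)
    (hn : 3 ≤ n) (hm : 1 ≤ m) (hmn : m < n) (hk : 1 ≤ k) :
    (Subgroup.closure
      ({g : Matrix.SpecialLinearGroup (Fin n) ℤ |
          ∀ i j : Fin n, if i = j then g.1 i j = 1
            else if (i : ℕ) < m ∧ m ≤ (j : ℕ) then (k : ℤ) ∣ g.1 i j
            else g.1 i j = 0} ∪
       {g : Matrix.SpecialLinearGroup (Fin n) ℤ |
          ∀ i j : Fin n, if i = j then g.1 i j = 1
            else if m ≤ (i : ℕ) ∧ (j : ℕ) < m then (k : ℤ) ∣ g.1 i j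
            else g.1 i j = 0})).FiniteIndex := by
  let s : Finset (Fin n) := {i | (i : ℕ) < m}
  have hs : s.Nonempty := ⟨⟨0, by lia⟩, by simpa [s] using Nat.succ_le_iff.mp hm⟩
  have hs' : sᶜ.Nonempty := ⟨⟨m, hmn⟩, by simp [s]⟩
  simpa [BlockUnipotent.blockUnipotent, s] using
    block_unipotent_generators_finite_index_general (by simpa using hn) hs hs'
      (q := (k : ℤ)) (by lia)
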